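/- arXiv:2603.01201 — 2 statements merged into one kernel-verified Lean document; each statement's English description precedes it below -/
import Mathlib

section
/- Let φ be an LTLf formula in negation normal form over a set of atoms P, and let A be a DFA over the alphabet 2^P whose accepted words are exactly the finite, possibly empty traces satisfying φ. Then for every finite trace h ∈ (2^P)^*, the DFA progression A_h of A through h accepts exactly the finite, possibly empty traces satisfying prog(φ, h). -/
inductive LTLf (P : Type) : Type where
  | tt : LTLf P
  | ff : LTLf P
  | atom : P → LTLf P
  | natom : P → LTLf P
  | conj : LTLf P → LTLf P → LTLf P
  | disj : LTLf P → LTLf P → LTLf P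
  | next : LTLf P → LTLf P
  | wnext : LTLf P → LTLf P
  | untl : LTLf P → LTLf P → LTLf P
  | release : LTLf P → LTLf P → LTLf P
  deriving DecidableEq

def LTLf.Sat {P : Type} : List (Set P) → LTLf P → Prop
  | _, .tt => True
  | _, .ff => False
  | [], .atom _ => False
  | w :: _, .atom p => p ∈ w
  | [], .natom _ => False
  | w :: _, .natom p => p ∉ w
  | τ, .conj φ₁ φ₂ => LTLf.Sat τ φ₁ ∧ LTLf.Sat τ φ₂
  | τ, .disj φ₁ φ₂ => LTLf.Sat τ φ₁ ∨ LTLf.Sat τ φ₂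
  | [], .next _ => False
  | _ :: τ, .next φ => τ ≠ [] ∧ LTLf.Sat τ φ
  | [], .wnext _ => True
  | _ :: τ, .wnext φ => τ = [] ∨ LTLf.Sat τ φ
  | [], .untl _ _ => False
  | w :: τ, .untl φ₁ φ₂ =>
      LTLf.Sat (w :: τ) φ₂ ∨ (LTLf.Sat (w :: τ) φ₁ ∧ LTLf.Sat τ (.untl φ₁ φ₂))
  | [], .release _ _ => True
  | w :: τ, .release φ₁ φ₂ =>
      LTLf.Sat (w :: τ) φ₂ ∧ (LTLf.Sat (w :: τ) φ₁ ∨ LTLf.Sat τ (.release φ₁ φ₂))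
termination_by τ φ => (τ.length, sizeOf φ)

open Classical in
noncomputable def LTLf.prog {P : Type} : LTLf P → Set P → LTLf P
  | .tt, _ => .tt
  | .ff, _ => .ff
  | .atom p, w => if p ∈ w then .tt else .ff
  | .natom p, w => if p ∈ w then .ff else .tt
  | .conj φ₁ φ₂, w => .conj (φ₁.prog w) (φ₂.prog w)
  | .disj φ₁ φ₂, w => .disj (φ₁.prog w) (φ₂.prog w)
  | .next φ, _ => .conj φ (.untl .tt .tt)
  | .wnext φ, _ => .disj φ (.release .ff .ff)
  | .untl φ₁ φ₂, w =>
      .disj (φ₂.prog w) (.conj (φ₁.prog w) (.conj (.untl φ₁ φ₂) (.untl .tt .tt)))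
  | .release φ₁ φ₂, w =>
      .conj (φ₂.prog w) (.disj (φ₁.prog w) (.disj (.release φ₁ φ₂) (.release .ff .ff)))

noncomputable def LTLf.progTrace {P : Type} (φ : LTLf P) (h : List (Set P)) : LTLf P :=
  h.foldl LTLf.prog φ

/-- The DFA progression of `A` through the word `h`: same DFA, but with start state
progressed to the state that `A` reaches from its start state on reading `h`. -/
def DFA.progress {α σ : Type*} (A : DFA α σ) (h : List α) : DFA α σ where
  step := A.step
  start := A.evalFrom A.start h
  accept := A.accept

/-- The product of two DFAs over a common alphabet: pairs of states, componentwise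
transitions, pairs of accepting states. -/
def DFA.product {α σ₁ σ₂ : Type*} (A₁ : DFA α σ₁) (A₂ : DFA α σ₂) : DFA α (σ₁ × σ₂) where
  step := fun s a => (A₁.step s.1 a, A₂.step s.2 a)
  start := (A₁.start, A₂.start)
  accept := {s | s.1 ∈ A₁.accept ∧ s.2 ∈ A₂.accept}

theorem LTLf.sat_untl_tt_tt {P : Type} (τ : List (Set P)) :
    LTLf.Sat τ (.untl .tt .tt) ↔ τ ≠ [] := by
  cases τ <;> simp [LTLf.Sat]

theorem LTLf.sat_release_ff_ff {P : Type} (τ : List (Set P)) :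
    LTLf.Sat τ (.release .ff .ff) ↔ τ = [] := by
  cases τ <;> simp [LTLf.Sat]

theorem LTLf.sat_conj {P : Type} (τ : List (Set P)) (φ₁ φ₂ : LTLf P) :
    LTLf.Sat τ (.conj φ₁ φ₂) ↔ LTLf.Sat τ φ₁ ∧ LTLf.Sat τ φ₂ := by
  cases τ <;> simp [LTLf.Sat]

theorem LTLf.sat_disj {P : Type} (τ : List (Set P)) (φ₁ φ₂ : LTLf P) :
    LTLf.Sat τ (.disj φ₁ φ₂) ↔ LTLf.Sat τ φ₁ ∨ LTLf.Sat τ φ₂ := by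
  cases τ <;> simp [LTLf.Sat]

theorem LTLf.sat_prog {P : Type} (φ : LTLf P) (w : Set P) (τ : List (Set P)) :
    LTLf.Sat τ (φ.prog w) ↔ LTLf.Sat (w :: τ) φ := by
  induction φ with
  | tt => simp [LTLf.prog, LTLf.Sat]
  | ff => simp [LTLf.prog, LTLf.Sat]
  | atom p => by_cases hp : p ∈ w <;> simp [LTLf.prog, LTLf.Sat, hp]
  | natom p => by_cases hp : p ∈ w <;> simp [LTLf.prog, LTLf.Sat, hp]
  | conj φ₁ φ₂ ih₁ ih₂ => simp only [LTLf.prog, LTLf.sat_conj, ih₁, ih₂]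
  | disj φ₁ φ₂ ih₁ ih₂ => simp only [LTLf.prog, LTLf.sat_disj, ih₁, ih₂]
  | next φ => simp [LTLf.prog, LTLf.sat_conj, LTLf.sat_untl_tt_tt, LTLf.Sat, and_comm]
  | wnext φ => simp [LTLf.prog, LTLf.sat_disj, LTLf.sat_release_ff_ff, LTLf.Sat, or_comm]
  | untl φ₁ φ₂ ih₁ ih₂ =>
    simp only [LTLf.prog, LTLf.sat_conj, LTLf.sat_disj, LTLf.sat_untl_tt_tt, ih₁, ih₂]
    cases τ <;> simp [LTLf.Sat]
  | release φ₁ φ₂ ih₁ ih₂ =>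
    simp only [LTLf.prog, LTLf.sat_conj, LTLf.sat_disj, LTLf.sat_release_ff_ff, ih₁, ih₂]
    cases τ <;> simp [LTLf.Sat]

theorem LTLf.sat_progTrace {P : Type} (φ : LTLf P) (h τ : List (Set P)) :
    LTLf.Sat τ (φ.progTrace h) ↔ LTLf.Sat (h ++ τ) φ := by
  induction h generalizing φ with
  | nil => rfl
  | cons w h ih => exact (ih (φ.prog w)).trans (LTLf.sat_prog φ w (h ++ τ))

theorem DFA.mem_accepts_progress {α σ : Type*} (A : DFA α σ) (h τ : List α) :
    τ ∈ (A.progress h).accepts ↔ h ++ τ ∈ A.accepts := by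
  rw [DFA.mem_accepts, DFA.mem_accepts, DFA.eval, DFA.eval, DFA.evalFrom_of_append]
  rfl

/-- If the DFA A accepts exactly the finite (possibly empty) traces
satisfying φ, then for every finite trace h the DFA progression A_h of A through h
accepts exactly the finite (possibly empty) traces satisfying prog(φ, h). -/
theorem dfa_progress_accepts_progTrace {P : Type} {S : Type}
    (φ : LTLf P) (A : DFA (Set P) S)
    (hA : ∀ τ : List (Set P), τ ∈ A.accepts ↔ LTLf.Sat τ φ) (h : List (Set P)) :
    ∀ τ : List (Set P), τ ∈ (A.progress h).accepts ↔ LTLf.Sat τ (φ.progTrace h) := by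
  intro τ
  rw [DFA.mem_accepts_progress, hA, LTLf.sat_progTrace]
end

section
/- Let Y and X be disjoint finite sets of agent and environment atoms, let φ be an LTLf formula over atoms Y ∪ X, and let A be a DFA over the alphabet 2^(Y∪X) with finitely many states whose accepted words are exactly the finite, possibly empty traces satisfying φ. Then there exists an agent strategy σ : (2^X)^* → 2^Y winning for φ if and only if there exists a game strategy κ that is winning in the DFA game A. -/
/-- The joint interpretation over atoms `Y ⊕ X` determined by an agent move `m.1 ⊆ Y`
and an environment move `m.2 ⊆ X`. -/
def joint {Y X : Type} (m : Set Y × Set X) : Set (Y ⊕ X) :=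
  {a | Sum.elim (· ∈ m.1) (· ∈ m.2) a}

/-- The finite trace (over `2^(Y∪X)`) formed by the first `k` joint moves of a play. -/
def jointTrace {Y X : Type} (π : ℕ → Set Y × Set X) (k : ℕ) : List (Set (Y ⊕ X)) :=
  (List.range k).map fun i => joint (π i)

/-- The finite trace corresponding to a history (finite sequence of joint moves). -/
def histTrace {Y X : Type} (h : List (Set Y × Set X)) : List (Set (Y ⊕ X)) :=
  h.map joint

/-- A play is σ-consistent if at every instant the agent move is the one prescribed by
the strategy σ on the preceding environment moves (in particular `Y_0 = σ(ε)`). -/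
def PlayConsistent {Y X : Type} (σ : List (Set X) → Set Y) (π : ℕ → Set Y × Set X) : Prop :=
  ∀ i : ℕ, (π i).1 = σ ((List.range i).map fun j => (π j).2)

/-- A history is σ-consistent if every agent move in it is prescribed by σ on the
preceding environment moves. -/
def HistConsistent {Y X : Type} (σ : List (Set X) → Set Y) (h : List (Set Y × Set X)) : Prop :=
  ∀ (i : ℕ) (hi : i < h.length), (h.get ⟨i, hi⟩).1 = σ ((h.take i).map Prod.snd)
/-- A strategy σ is winning for the LTLf formula φ over atoms Y ∪ X if every
σ-consistent play has a finite, possibly empty, prefix satisfying φ. -/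
def WinningFor {Y X : Type} (σ : List (Set X) → Set Y) (φ : LTLf (Y ⊕ X)) : Prop :=
  ∀ π : ℕ → Set Y × Set X, PlayConsistent σ π → ∃ k : ℕ, LTLf.Sat (jointTrace π k) φ

/-- A strategy σ is winning for φ assuming the history h if for every σ-consistent play τ
the concatenation h·τ has a finite, possibly empty, prefix (extending h) satisfying φ. -/
def WinningAssuming {Y X : Type} (σ : List (Set X) → Set Y) (φ : LTLf (Y ⊕ X))
    (h : List (Set Y × Set X)) : Prop :=
  ∀ π : ℕ → Set Y × Set X, PlayConsistent σ π →
    ∃ k : ℕ, LTLf.Sat (histTrace h ++ jointTrace π k) φ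

/-- A strategy σ solves incremental synthesis for (φ_org, h, φ_new) if every σ-consistent
play has a finite, possibly empty, prefix ρ such that h·ρ satisfies φ_org and ρ
satisfies φ_new. -/
def SolvesIncremental {Y X : Type} (σ : List (Set X) → Set Y) (φorg : LTLf (Y ⊕ X))
    (h : List (Set Y × Set X)) (φnew : LTLf (Y ⊕ X)) : Prop :=
  ∀ π : ℕ → Set Y × Set X, PlayConsistent σ π →
    ∃ k : ℕ, LTLf.Sat (histTrace h ++ jointTrace π k) φorg ∧ LTLf.Sat (jointTrace π k) φnew
/-- A play is κ-consistent in the DFA game `G` if at every instant the agent move is the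
one prescribed by the game strategy κ on the state that `G` reaches from its start state
on reading the joint trace so far (in particular `Y_0 = κ(ι)`). -/
def GameConsistent {Y X S : Type} (G : DFA (Set (Y ⊕ X)) S) (κ : S → Set Y)
    (π : ℕ → Set Y × Set X) : Prop :=
  ∀ i : ℕ, (π i).1 = κ (G.evalFrom G.start (jointTrace π i))

/-- A game strategy κ is winning in the DFA game `G` if every κ-consistent play has a
finite prefix accepted by `G`. -/
def GameWinning {Y X S : Type} (G : DFA (Set (Y ⊕ X)) S) (κ : S → Set Y) : Prop :=
  ∀ π : ℕ → Set Y × Set X, GameConsistent G κ π →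
    ∃ k : ℕ, G.evalFrom G.start (jointTrace π k) ∈ G.accept

/-- The fixpoint approximants of the winning region: W₀ = F and
W_{i+1} = W_i ∪ { s | ∃ Y' ⊆ Y, ∀ X' ⊆ X, δ(s, Y'∪X') ∈ W_i }. -/
def WinApprox {Y X S : Type} (G : DFA (Set (Y ⊕ X)) S) : ℕ → Set S
  | 0 => G.accept
  | i + 1 => WinApprox G i ∪
      {s | ∃ A : Set Y, ∀ E : Set X, G.step s (joint (A, E)) ∈ WinApprox G i}

/-- The state of the DFA game `G` reached from state `s` against the environment move
sequence `e` when the agent plays according to the game strategy κ. -/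
def inducedState {Y X S : Type} (G : DFA (Set (Y ⊕ X)) S) (κ : S → Set Y) :
    S → List (Set X) → S
  | s, [] => s
  | s, x :: e => inducedState G κ (G.step s (joint (κ s, x))) e

/-- The agent strategy induced by the game strategy κ on the DFA game `G`:
σ(ε) = κ(ι) and σ(X₀⋯Xₙ) = κ(δ(ι, (Y₀∪X₀)⋯(Yₙ∪Xₙ))) with the agent moves Yᵢ
themselves determined recursively by the strategy. -/
def inducedStrategy {Y X S : Type} (G : DFA (Set (Y ⊕ X)) S) (κ : S → Set Y)
    (e : List (Set X)) : Set Y :=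
  κ (inducedState G κ G.start e)

theorem jointTrace_succ {Y X : Type} (π : ℕ → Set Y × Set X) (k : ℕ) :
    jointTrace π (k + 1) = jointTrace π k ++ [joint (π k)] := by
  simp [jointTrace, List.range_succ]

theorem evalFrom_jointTrace_succ {Y X S : Type} (G : DFA (Set (Y ⊕ X)) S) (s : S)
    (π : ℕ → Set Y × Set X) (k : ℕ) :
    G.evalFrom s (jointTrace π (k + 1)) =
      G.step (G.evalFrom s (jointTrace π k)) (joint (π k)) := by
  rw [jointTrace_succ, DFA.evalFrom_append_singleton]

theorem inducedState_append_singleton {Y X S : Type} (G : DFA (Set (Y ⊕ X)) S)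
    (κ : S → Set Y) (s : S) (e : List (Set X)) (x : Set X) :
    inducedState G κ s (e ++ [x]) =
      G.step (inducedState G κ s e) (joint (κ (inducedState G κ s e), x)) := by
  induction e generalizing s with
  | nil => rfl
  | cons y e ih => exact ih _

/-- Plays consistent with the induced agent strategy are consistent with the game strategy. -/
theorem PlayConsistent.gameConsistent {Y X S : Type} {G : DFA (Set (Y ⊕ X)) S}
    {κ : S → Set Y} {π : ℕ → Set Y × Set X}
    (hπ : PlayConsistent (inducedStrategy G κ) π) : GameConsistent G κ π := by
  have state_eq : ∀ i, inducedState G κ G.start ((List.range i).map fun j => (π j).2) =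
      G.evalFrom G.start (jointTrace π i) := by
    intro i
    induction i with
    | zero => rfl
    | succ i ih =>
      have hmove : κ (G.evalFrom G.start (jointTrace π i)) = (π i).1 := by
        rw [hπ i, inducedStrategy, ih]
      rw [evalFrom_jointTrace_succ, List.range_succ, List.map_append, List.map_singleton,
        inducedState_append_singleton, ih, hmove]
  intro i
  rw [hπ i, inducedStrategy, state_eq]

theorem winApprox_mono {Y X S : Type} (G : DFA (Set (Y ⊕ X)) S) : Monotone (WinApprox G) :=
  monotone_nat_of_le_succ fun _ _ hs => Or.inl hs

/-- A single game strategy makes progress from every non-accepting state of the winning region. -/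
theorem exists_strategy_decreasing_winApprox {Y X S : Type} (G : DFA (Set (Y ⊕ X)) S) :
    ∃ κ : S → Set Y, ∀ n, ∀ s ∈ WinApprox G (n + 1), s ∉ G.accept →
      ∀ E : Set X, G.step s (joint (κ s, E)) ∈ WinApprox G n := by
  classical
  have move : ∀ s, ∃ B : Set Y, ∀ n, s ∈ WinApprox G (n + 1) → s ∉ G.accept →
      ∀ E : Set X, G.step s (joint (B, E)) ∈ WinApprox G n := by
    intro s
    by_cases h : ∃ n, s ∈ WinApprox G n
    · have hmin := Nat.find_spec h
      rcases hm : Nat.find h with _ | m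
      · rw [hm] at hmin
        exact ⟨∅, fun _ _ hs => absurd hmin hs⟩
      · rw [hm] at hmin
        rcases hmin with hmin | ⟨B, hB⟩
        · exact absurd hmin (Nat.find_min h (by omega))
        · refine ⟨B, fun n hn _ E => winApprox_mono G ?_ (hB E)⟩
          have := Nat.find_min' h hn
          omega
    · exact ⟨∅, fun n hn => absurd ⟨_, hn⟩ h⟩
  choose κ hκ using move
  exact ⟨κ, fun n s => hκ s n⟩

theorem exists_gameWinning_of_start_mem_winApprox {Y X S : Type} (G : DFA (Set (Y ⊕ X)) S)
    {n : ℕ} (hn : G.start ∈ WinApprox G n) : ∃ κ : S → Set Y, GameWinning G κ := by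
  obtain ⟨κ, hκ⟩ := exists_strategy_decreasing_winApprox G
  refine ⟨κ, fun π hπ => ?_⟩
  have reach : ∀ m i, G.evalFrom G.start (jointTrace π i) ∈ WinApprox G m →
      ∃ k, G.evalFrom G.start (jointTrace π k) ∈ G.accept := by
    intro m
    induction m with
    | zero => exact fun i hi => ⟨i, hi⟩
    | succ m ih =>
      intro i hi
      by_cases hacc : G.evalFrom G.start (jointTrace π i) ∈ G.accept
      · exact ⟨i, hacc⟩
      · refine ih (i + 1) ?_
        rw [evalFrom_jointTrace_succ]
        have := hκ m _ hi hacc (π i).2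
        rwa [← hπ i] at this
  exact reach n 0 hn

/-- Outside the winning region the environment can answer any agent move by staying outside. -/
theorem exists_step_notMem_winApprox {Y X S : Type} [Finite X] (G : DFA (Set (Y ⊕ X)) S)
    {s : S} (hs : ∀ n, s ∉ WinApprox G n) (B : Set Y) :
    ∃ E : Set X, ∀ n, G.step s (joint (B, E)) ∉ WinApprox G n := by
  by_contra! h
  choose rank hrank using h
  obtain ⟨N, hN⟩ := (Set.finite_range rank).bddAbove
  exact hs (N + 1) (Or.inr ⟨B, fun E => winApprox_mono G (hN ⟨E, rfl⟩) (hrank E)⟩)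

/-- If the start state is outside the winning region, every agent strategy has a consistent play
that never reaches an accepting state. -/
theorem exists_playConsistent_forall_notMem_accept {Y X S : Type} [Finite X]
    (G : DFA (Set (Y ⊕ X)) S) (hstart : ∀ n, G.start ∉ WinApprox G n)
    (σ : List (Set X) → Set Y) :
    ∃ π : ℕ → Set Y × Set X, PlayConsistent σ π ∧
      ∀ k, G.evalFrom G.start (jointTrace π k) ∉ G.accept := by
  have response : ∀ (s : S) (B : Set Y), ∃ E : Set X, (∀ n, s ∉ WinApprox G n) →
      ∀ n, G.step s (joint (B, E)) ∉ WinApprox G n := by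
    intro s B
    by_cases hs : ∀ n, s ∉ WinApprox G n
    · obtain ⟨E, hE⟩ := exists_step_notMem_winApprox G hs B
      exact ⟨E, fun _ => hE⟩
    · exact ⟨∅, fun h => absurd h hs⟩
  choose e he using response
  let pos : ℕ → List (Set X) × S := fun k =>
    Nat.rec ([], G.start) (fun _ p =>
      (p.1 ++ [e p.2 (σ p.1)], G.step p.2 (joint (σ p.1, e p.2 (σ p.1))))) k
  let π : ℕ → Set Y × Set X := fun k => (σ (pos k).1, e (pos k).2 (σ (pos k).1))
  have env_eq : ∀ k, ((List.range k).map fun j => (π j).2) = (pos k).1 := by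
    intro k
    induction k with
    | zero => rfl
    | succ k ih => rw [List.range_succ, List.map_append, ih, List.map_singleton]
  have state_eq : ∀ k, G.evalFrom G.start (jointTrace π k) = (pos k).2 := by
    intro k
    induction k with
    | zero => rfl
    | succ k ih => rw [evalFrom_jointTrace_succ, ih]
  have avoid : ∀ k n, (pos k).2 ∉ WinApprox G n := by
    intro k
    induction k with
    | zero => exact hstart
    | succ k ih => exact he _ _ ih
  refine ⟨π, fun i => by rw [env_eq], fun k => ?_⟩
  rw [state_eq]
  exact avoid k 0

/-- If the DFA A (finitely many states, over the alphabet 2^(Y∪X) with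
Y, X finite) accepts exactly the finite, possibly empty, traces satisfying φ, then there
is an agent strategy winning for φ iff there is a game strategy winning in the DFA
game A. -/
theorem agent_winning_iff_game_winning {Y X S : Type}
    [Fintype Y] [Fintype X] [Fintype S]
    (φ : LTLf (Y ⊕ X)) (A : DFA (Set (Y ⊕ X)) S)
    (hA : ∀ τ : List (Set (Y ⊕ X)), τ ∈ A.accepts ↔ LTLf.Sat τ φ) :
    (∃ σ : List (Set X) → Set Y, WinningFor σ φ) ↔ (∃ κ : S → Set Y, GameWinning A κ) := by
  constructor
  · rintro ⟨σ, hσ⟩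
    by_cases h : ∃ n, A.start ∈ WinApprox A n
    · obtain ⟨n, hn⟩ := h
      exact exists_gameWinning_of_start_mem_winApprox A hn
    · push Not at h
      obtain ⟨π, hπ, hrej⟩ := exists_playConsistent_forall_notMem_accept A h σ
      obtain ⟨k, hk⟩ := hσ π hπ
      exact absurd ((hA _).2 hk) (hrej k)
  · rintro ⟨κ, hκ⟩
    refine ⟨inducedStrategy A κ, fun π hπ => ?_⟩
    obtain ⟨k, hk⟩ := hκ π hπ.gameConsistent
    exact ⟨k, (hA _).1 hk⟩
end
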